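/- arXiv:1903.12018 — 3 statements merged into one kernel-verified Lean document; each statement's English description precedes it below -/
import Mathlib

section
/- Let a ∈ ℝ^p and b ∈ ℝ^q be jointly Gaussian zero-mean random vectors with Var(b) invertible. Then the conditional expectation of a given b is the linear function E[a | b] = Cov(a,b) Var(b)⁻¹ b almost surely. -/
open MeasureTheory ProbabilityTheory

/-! The residual `a - M b` is jointly Gaussian with `b`, and `M Var(b) = Cov(a, b)` says exactly
that it is uncorrelated with `b`. For jointly Gaussian vectors this means independence, so
conditioning on `b` leaves `M b` alone and replaces the residual by its mean. -/

section CondExp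

variable {Ω E F : Type*} {mΩ : MeasurableSpace Ω} {μ : Measure Ω} [IsFiniteMeasure μ]
  [NormedAddCommGroup E] [NormedSpace ℝ E] [CompleteSpace E] [MeasurableSpace E] [BorelSpace E]
  [SecondCountableTopology E]

theorem condExp_comap_ae_eq_integral_of_indepFun [mF : MeasurableSpace F] {X : Ω → E} {Y : Ω → F}
    (hX : AEMeasurable X μ) (hY : Measurable Y) (hXY : IndepFun X Y μ) :
    μ[X | mF.comap Y] =ᵐ[μ] fun _ => ∫ ω, X ω ∂μ := by
  have hind : IndepFun (hX.mk X) Y μ := hXY.congr hX.ae_eq_mk .rfl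
  calc μ[X | mF.comap Y]
    _ =ᵐ[μ] μ[hX.mk X | mF.comap Y] := condExp_congr_ae hX.ae_eq_mk
    _ =ᵐ[μ] fun _ => ∫ ω, hX.mk X ω ∂μ :=
      condExp_indep_eq hX.measurable_mk.comap_le hY.comap_le
        (comap_measurable _).stronglyMeasurable hind
    _ = fun _ => ∫ ω, X ω ∂μ := by rw [integral_congr_ae hX.ae_eq_mk]

theorem condExp_comap_ae_eq_of_indepFun_sub [NormedAddCommGroup F] [NormedSpace ℝ F]
    [CompleteSpace F] [mF : MeasurableSpace F] [BorelSpace F] {X : Ω → E} {Y : Ω → F}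
    (hX : Integrable X μ) (hY : Integrable Y μ) (hYm : Measurable Y) (L : F →L[ℝ] E)
    (hind : IndepFun (fun ω => X ω - L (Y ω)) Y μ) :
    μ[X | mF.comap Y] =ᵐ[μ] fun ω => ∫ ω', X ω' ∂μ + L (Y ω - ∫ ω', Y ω' ∂μ) := by
  have hLY : Integrable (fun ω => L (Y ω)) μ := L.integrable_comp hY
  have hR : Integrable (fun ω => X ω - L (Y ω)) μ := hX.sub hLY
  have hLYm : StronglyMeasurable[mF.comap Y] fun ω => L (Y ω) :=
    (L.measurable.comp (comap_measurable Y)).stronglyMeasurable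
  have hmean : ∫ ω, (X ω - L (Y ω)) ∂μ = ∫ ω, X ω ∂μ - L (∫ ω, Y ω ∂μ) := by
    rw [integral_sub hX hLY, L.integral_comp_comm hY]
  calc μ[X | mF.comap Y]
    _ = μ[(fun ω => X ω - L (Y ω)) + fun ω => L (Y ω) | mF.comap Y] := by
      congr 1
      exact (sub_add_cancel X _).symm
    _ =ᵐ[μ] μ[fun ω => X ω - L (Y ω) | mF.comap Y] + μ[fun ω => L (Y ω) | mF.comap Y] :=
      condExp_add hR hLY _
    _ =ᵐ[μ] (fun _ => ∫ ω, (X ω - L (Y ω)) ∂μ) + fun ω => L (Y ω) :=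
      (condExp_comap_ae_eq_integral_of_indepFun hR.aemeasurable hYm hind).add
        (condExp_of_stronglyMeasurable hYm.comap_le hLYm hLY).eventuallyEq
    _ = fun ω => ∫ ω', X ω' ∂μ + L (Y ω - ∫ ω', Y ω' ∂μ) := by
      ext ω
      rw [Pi.add_apply, hmean, map_sub]
      abel

end CondExp

section RandomVector

open Matrix

variable {Ω ι κ : Type*} {mΩ : MeasurableSpace Ω} {μ : Measure Ω}

section CovarianceMatrix

/-- The cross-covariance matrix `Cov(X, Y)` of two random vectors, given by the covariances of
their coordinates; `Var(X)` is `covarianceMatrix X X μ`. -/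
noncomputable def covarianceMatrix (X : Ω → ι → ℝ) (Y : Ω → κ → ℝ) (μ : Measure Ω) :
    Matrix ι κ ℝ :=
  of fun i j => cov[fun ω => X ω i, fun ω => Y ω j; μ]

variable [IsFiniteMeasure μ] {X Z : Ω → ι → ℝ} {Y : Ω → κ → ℝ}

theorem covarianceMatrix_sub_left (hX : ∀ i, MemLp (fun ω => X ω i) 2 μ)
    (hZ : ∀ i, MemLp (fun ω => Z ω i) 2 μ) (hY : ∀ j, MemLp (fun ω => Y ω j) 2 μ) :
    covarianceMatrix (fun ω => X ω - Z ω) Y μ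
      = covarianceMatrix X Y μ - covarianceMatrix Z Y μ := by
  ext i j
  exact covariance_fun_sub_left (hX i) (hZ i) (hY j)

theorem covarianceMatrix_mulVec_left {ι' : Type*} [Fintype ι] (M : Matrix ι' ι ℝ)
    (hX : ∀ i, MemLp (fun ω => X ω i) 2 μ) (hY : ∀ j, MemLp (fun ω => Y ω j) 2 μ) :
    covarianceMatrix (fun ω => M *ᵥ X ω) Y μ = M * covarianceMatrix X Y μ := by
  ext i j
  calc cov[fun ω => ∑ l, M i l * X ω l, fun ω => Y ω j; μ]
    _ = ∑ l, cov[fun ω => M i l * X ω l, fun ω => Y ω j; μ] :=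
      covariance_fun_sum_left (fun l => (hX l).const_mul _) (hY j)
    _ = ∑ l, M i l * cov[fun ω => X ω l, fun ω => Y ω j; μ] := by
      simp only [covariance_const_mul_left]

end CovarianceMatrix

section Gaussian

variable {X : Ω → ι → ℝ} {Y : Ω → κ → ℝ}

theorem indepFun_sub_mulVec_of_mul_covarianceMatrix_eq [Finite ι] [Fintype κ]
    (hXY : HasGaussianLaw (fun ω => (X ω, Y ω)) μ) {M : Matrix ι κ ℝ}
    (hM : M * covarianceMatrix Y Y μ = covarianceMatrix X Y μ) :
    IndepFun (fun ω => X ω - M *ᵥ Y ω) Y μ := by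
  have := Fintype.ofFinite ι
  have := hXY.isProbabilityMeasure
  have hX2 (i : ι) : MemLp (fun ω => X ω i) 2 μ := (hXY.fst.eval i).memLp_two
  have hY2 (j : κ) : MemLp (fun ω => Y ω j) 2 μ := (hXY.snd.eval j).memLp_two
  have hMY2 (i : ι) : MemLp (fun ω => (M *ᵥ Y ω) i) 2 μ :=
    memLp_finsetSum _ fun j _ => (hY2 j).const_mul _
  let residual : (ι → ℝ) × (κ → ℝ) →L[ℝ] ι → ℝ :=
    .fst ℝ _ _ - M.mulVecLin.toContinuousLinearMap ∘L .snd ℝ _ _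
  have hlaw : HasGaussianLaw (fun ω => (X ω - M *ᵥ Y ω, Y ω)) μ :=
    hXY.map (residual.prod (.snd ℝ _ _))
  have hcov : covarianceMatrix (fun ω => X ω - M *ᵥ Y ω) Y μ = 0 := by
    rw [covarianceMatrix_sub_left hX2 hMY2 hY2, covarianceMatrix_mulVec_left M hY2 hY2, hM,
      sub_self]
  exact hlaw.indepFun_of_covariance_eval (X := fun i ω => (X ω - M *ᵥ Y ω) i)
    (Y := fun j ω => Y ω j) fun i j => congrFun₂ hcov i j

theorem condExp_comap_ae_eq_of_mul_covarianceMatrix_eq [Fintype ι] [Fintype κ]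
    (hXY : HasGaussianLaw (fun ω => (X ω, Y ω)) μ) (hY : Measurable Y) {M : Matrix ι κ ℝ}
    (hM : M * covarianceMatrix Y Y μ = covarianceMatrix X Y μ) :
    μ[X | MeasurableSpace.comap Y inferInstance]
      =ᵐ[μ] fun ω => ∫ ω', X ω' ∂μ + M *ᵥ (Y ω - ∫ ω', Y ω' ∂μ) :=
  have := hXY.isProbabilityMeasure
  condExp_comap_ae_eq_of_indepFun_sub hXY.fst.integrable hXY.snd.integrable hY
    M.mulVecLin.toContinuousLinearMap (indepFun_sub_mulVec_of_mul_covarianceMatrix_eq hXY hM)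

theorem condExp_eval_comap_ae_eq_of_mul_covarianceMatrix_eq [Finite ι] [Fintype κ]
    (hXY : HasGaussianLaw (fun ω => (X ω, Y ω)) μ) (hY : Measurable Y) {M : Matrix ι κ ℝ}
    (hM : M * covarianceMatrix Y Y μ = covarianceMatrix X Y μ) (i : ι) :
    μ[fun ω => X ω i | MeasurableSpace.comap Y inferInstance]
      =ᵐ[μ] fun ω => ∫ ω', X ω' i ∂μ + (M *ᵥ fun j => Y ω j - ∫ ω', Y ω' j ∂μ) i := by
  have := Fintype.ofFinite ι
  have hmeanX : (∫ ω, X ω ∂μ) i = ∫ ω, X ω i ∂μ :=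
    eval_integral (fun i => (hXY.fst.eval i).integrable) i
  have hmeanY (j : κ) : (∫ ω, Y ω ∂μ) j = ∫ ω, Y ω j ∂μ :=
    eval_integral (fun j => (hXY.snd.eval j).integrable) j
  filter_upwards [condExp_comap_ae_eq_of_mul_covarianceMatrix_eq hXY hY hM,
    (ContinuousLinearMap.proj (R := ℝ) i).comp_condExp_comm
      (m := MeasurableSpace.comap Y inferInstance) hXY.fst.integrable] with ω hω hproj
  simp only [← hmeanX, ← hmeanY]
  exact hproj.symm.trans (congrFun hω i)

variable [Fintype ι]

theorem exists_forall_apply_eq_dotProduct (L : StrongDual ℝ (ι → ℝ)) :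
    ∃ c : ι → ℝ, ∀ x, L x = c ⬝ᵥ x := by
  classical
  obtain ⟨c, hc⟩ := (dotProductEquiv ℝ ι).surjective (L : Module.Dual ℝ (ι → ℝ))
  exact ⟨c, fun x => (LinearMap.congr_fun hc x).symm⟩

theorem aemeasurable_of_forall_aemeasurable_dotProduct
    (hX : ∀ c : ι → ℝ, AEMeasurable (fun ω => c ⬝ᵥ X ω) μ) : AEMeasurable X μ := by
  classical
  exact aemeasurable_pi_iff.2 fun i => by
    simpa only [single_one_dotProduct] using hX (Pi.single i 1)

theorem hasGaussianLaw_prodMk_of_forall_dotProduct [Fintype κ]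
    (h : ∀ c d, HasGaussianLaw (fun ω => c ⬝ᵥ X ω + d ⬝ᵥ Y ω) μ) :
    HasGaussianLaw (fun ω => (X ω, Y ω)) μ := by
  have hX : AEMeasurable X μ := aemeasurable_of_forall_aemeasurable_dotProduct fun c => by
    simpa only [zero_dotProduct, add_zero] using (h c 0).aemeasurable
  have hY : AEMeasurable Y μ := aemeasurable_of_forall_aemeasurable_dotProduct fun d => by
    simpa only [zero_dotProduct, zero_add] using (h 0 d).aemeasurable
  refine ⟨isGaussian_of_isGaussian_map fun L => ?_⟩
  obtain ⟨c, hc⟩ := exists_forall_apply_eq_dotProduct (L ∘L .inl ℝ (ι → ℝ) (κ → ℝ))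
  obtain ⟨d, hd⟩ := exists_forall_apply_eq_dotProduct (L ∘L .inr ℝ (ι → ℝ) (κ → ℝ))
  have hL : L ∘ (fun ω => (X ω, Y ω)) = fun ω => c ⬝ᵥ X ω + d ⬝ᵥ Y ω := by
    ext ω
    rw [← hc, ← hd]
    exact (L.comp_inl_add_comp_inr (X ω, Y ω)).symm
  rw [AEMeasurable.map_map_of_aemeasurable L.measurable.aemeasurable (hX.prodMk hY), hL]
  exact (h c d).isGaussian_map

theorem integral_eval_eq_of_forall_map_dotProduct_eq_gaussianReal {m : ι → ℝ}
    (h : ∀ c : ι → ℝ, ∃ v, μ.map (fun ω => c ⬝ᵥ X ω) = gaussianReal (c ⬝ᵥ m) v) (i : ι) :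
    ∫ ω, X ω i ∂μ = m i := by
  classical
  obtain ⟨v, hv⟩ := h (Pi.single i 1)
  simp only [single_one_dotProduct] at hv
  have hXi : AEMeasurable (fun ω => X ω i) μ :=
    .of_map_ne_zero (hv ▸ NeZero.ne (gaussianReal (m i) v))
  calc ∫ ω, X ω i ∂μ
    _ = ∫ x, x ∂μ.map (fun ω => X ω i) := (integral_map hXi aestronglyMeasurable_id).symm
    _ = m i := by rw [hv, integral_id_gaussianReal]

end Gaussian

theorem stmt4_general [Fintype ι] [Fintype κ] {a : Ω → ι → ℝ} {b : Ω → κ → ℝ}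
    (hb : Measurable b) (ma : ι → ℝ) (mb : κ → ℝ)
    (hGauss : ∀ (c : ι → ℝ) (d : κ → ℝ), ∃ v : NNReal,
      μ.map (fun ω => c ⬝ᵥ a ω + d ⬝ᵥ b ω) = gaussianReal (c ⬝ᵥ ma + d ⬝ᵥ mb) v)
    {Covab : Matrix ι κ ℝ} {Varb : Matrix κ κ ℝ}
    (hCov : ∀ k l, Covab k l = ∫ ω, (a ω k - ma k) * (b ω l - mb l) ∂μ)
    (hVar : ∀ l l', Varb l l' = ∫ ω, (b ω l - mb l) * (b ω l' - mb l') ∂μ)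
    {M : Matrix ι κ ℝ} (hM : M * Varb = Covab) (k : ι) :
    μ[fun ω => a ω k | MeasurableSpace.comap b inferInstance]
      =ᵐ[μ] fun ω => ma k + (M *ᵥ (b ω - mb)) k := by
  have hab : HasGaussianLaw (fun ω => (a ω, b ω)) μ :=
    hasGaussianLaw_prodMk_of_forall_dotProduct fun c d => by
      obtain ⟨v, hv⟩ := hGauss c d
      exact ⟨hv ▸ inferInstance⟩
  have hma : ∀ i, ∫ ω, a ω i ∂μ = ma i :=
    integral_eval_eq_of_forall_map_dotProduct_eq_gaussianReal fun c => by simpa using hGauss c 0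
  have hmb : ∀ j, ∫ ω, b ω j ∂μ = mb j :=
    integral_eval_eq_of_forall_map_dotProduct_eq_gaussianReal fun d => by simpa using hGauss 0 d
  have hVarb : covarianceMatrix b b μ = Varb := by
    ext l l'
    simp only [covarianceMatrix, of_apply, covariance, hmb, hVar]
  have hCovab : covarianceMatrix a b μ = Covab := by
    ext i l
    simp only [covarianceMatrix, of_apply, covariance, hma, hmb, hCov]
  have hcond := condExp_eval_comap_ae_eq_of_mul_covarianceMatrix_eq hab hb
    (hVarb ▸ hCovab ▸ hM) k
  simp only [hma, hmb] at hcond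
  exact hcond

end RandomVector

/-- If `a ∈ ℝ^p`, `b ∈ ℝ^q` are jointly Gaussian zero-mean random vectors (every linear
combination of their components has a centered Gaussian law) and `Var(b)` is invertible,
then `E[a | b] = Cov(a,b) Var(b)⁻¹ b` almost surely (componentwise). -/
theorem stmt4 {Ω : Type*} [MeasurableSpace Ω] (μ : Measure Ω) [IsProbabilityMeasure μ]
    (p q : ℕ) (a : Ω → Fin p → ℝ) (b : Ω → Fin q → ℝ)
    (ha : Measurable a) (hb : Measurable b)
    (hGauss : ∀ (c : Fin p → ℝ) (d : Fin q → ℝ), ∃ v : NNReal,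
      μ.map (fun ω => (∑ k, c k * a ω k) + ∑ l, d l * b ω l) = gaussianReal 0 v)
    (Covab : Matrix (Fin p) (Fin q) ℝ) (Varb : Matrix (Fin q) (Fin q) ℝ)
    (hCov : ∀ k l, Covab k l = ∫ ω, a ω k * b ω l ∂μ)
    (hVar : ∀ l l', Varb l l' = ∫ ω, b ω l * b ω l' ∂μ)
    (hinv : IsUnit Varb.det) :
    ∀ k, (μ[(fun ω => a ω k) | MeasurableSpace.comap b inferInstance])
      =ᵐ[μ] fun ω => (Covab * Varb⁻¹).mulVec (b ω) k := by
  simpa using stmt4_general hb 0 0 (by simpa [dotProduct] using hGauss) (by simpa using hCov)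
    (by simpa using hVar) (Matrix.nonsing_inv_mul_cancel_right Varb Covab hinv)
end

section
/- Let (x, y_0, y_1, …, y_n) be jointly Gaussian zero-mean random vectors with Σ_00 = Cov(y_0,y_0) invertible, and define x̂_0 = E[x | y_0], ỹ_i = y_i − E[y_i | y_0], Θ̂_i = Cov(x, ỹ_i) and Σ̂_ii = Cov(ỹ_i, ỹ_i). If Σ̂_ii is invertible, then for each i ∈ {1,…,n}, E[x | y_0, y_i] = x̂_0 + Θ̂_i Σ̂_ii⁻¹ ỹ_i almost surely. -/
open MeasureTheory ProbabilityTheory Matrix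

/-!
For a jointly Gaussian family, `E[X | Y₀]` is affine in `Y₀`, so the innovations `X̃` and `Ỹ` given
`Y₀` are jointly Gaussian with `Y₀`. Both are orthogonal to `Y₀`, and `Cov(X̃, Ỹ) = Cov(X, Ỹ)`. If
`K Cov(Ỹ, Ỹ) = Cov(X, Ỹ)`, then the residual `X̃ - K Ỹ` is uncorrelated with `Y₀` and with `Ỹ`,
hence independent of `(Y₀, Ỹ)`. Since `(Y₀, Ỹ)` and `(Y₀, Y)` generate the same σ-algebra,
conditioning `X = E[X | Y₀] + K Ỹ + (X̃ - K Ỹ)` on it removes the last, centred, term.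
-/

/-- The cross-covariance matrix `Cov(X, Y)` of two random vectors, with entries
`Cov(X_i, Y_j)`. -/
noncomputable def crossCov {Ω ι κ : Type*} {_ : MeasurableSpace Ω} (μ : Measure Ω)
    (X : Ω → ι → ℝ) (Y : Ω → κ → ℝ) : Matrix ι κ ℝ :=
  .of fun i j ↦ cov[fun ω ↦ X ω i, fun ω ↦ Y ω j; μ]

/-- The innovation `Y - E[Y | Y₀]` of the random vector `Y` given the random variable `Y₀`, with
the conditional expectation taken componentwise. -/
noncomputable def innovation {Ω E ι : Type*} {_ : MeasurableSpace Ω} [MeasurableSpace E]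
    (μ : Measure Ω) (Y₀ : Ω → E) (Y : Ω → ι → ℝ) : Ω → ι → ℝ :=
  fun ω i ↦ Y ω i - (μ[fun ω' ↦ Y ω' i | MeasurableSpace.comap Y₀ inferInstance]) ω

section Development

variable {Ω ι κ η : Type*} {mΩ : MeasurableSpace Ω} {μ : Measure Ω}

section CrossCov

variable [IsFiniteMeasure μ] [Fintype ι] [Fintype κ] {X X' : Ω → ι → ℝ} {Y : Ω → κ → ℝ}

lemma crossCov_sub_left (hX : MemLp X 2 μ) (hX' : MemLp X' 2 μ) (hY : MemLp Y 2 μ) :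
    crossCov μ (X - X') Y = crossCov μ X Y - crossCov μ X' Y :=
  Matrix.ext fun i j ↦ covariance_fun_sub_left (hX.eval i) (hX'.eval i) (hY.eval j)

lemma crossCov_mulVec_left (A : Matrix η ι ℝ) (hX : MemLp X 2 μ) (hY : MemLp Y 2 μ) :
    crossCov μ (fun ω ↦ A *ᵥ X ω) Y = A * crossCov μ X Y := by
  ext k j
  simp only [crossCov, of_apply, mulVec, dotProduct, mul_apply]
  rw [covariance_fun_sum_left (fun i ↦ (hX.eval i).const_mul _) (hY.eval j)]
  simp only [covariance_const_mul_left]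

end CrossCov

lemma memLp_mulVec [Fintype ι] [Fintype η] {p : ENNReal} {X : Ω → ι → ℝ} (A : Matrix η ι ℝ)
    (hX : MemLp X p μ) : MemLp (fun ω ↦ A *ᵥ X ω) p μ :=
  A.mulVecLin.toContinuousLinearMap.comp_memLp' hX

lemma integral_mulVec [Fintype ι] {X : Ω → ι → ℝ} (A : Matrix η ι ℝ) (hX : Integrable X μ)
    (k : η) : ∫ ω, (A *ᵥ X ω) k ∂μ = (A *ᵥ fun i ↦ ∫ ω, X ω i ∂μ) k := by
  simp only [mulVec, dotProduct]
  rw [integral_finsetSum _ fun i _ ↦ (hX.eval i).const_mul _]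
  simp only [integral_const_mul]

section LinearRegression

lemma exists_forall_inner_sub_sum_smul_eq_zero {𝕜 E : Type*} [RCLike 𝕜]
    [NormedAddCommGroup E] [InnerProductSpace 𝕜 E] [Fintype ι] (x : E) (v : ι → E) :
    ∃ c : ι → 𝕜, ∀ j, inner 𝕜 (x - ∑ i, c i • v i) (v j) = 0 := by
  let V := Submodule.span 𝕜 (Set.range v)
  have : FiniteDimensional 𝕜 V := .span_of_finite 𝕜 (Set.finite_range v)
  obtain ⟨c, hc⟩ := Submodule.mem_span_range_iff_exists_fun 𝕜 |>.1 (V.starProjection_apply_mem x)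
  refine ⟨c, fun j ↦ ?_⟩
  rw [hc]
  exact V.inner_left_of_mem_orthogonal (Submodule.subset_span ⟨j, rfl⟩)
    (V.sub_starProjection_mem_orthogonal x)

variable [IsFiniteMeasure μ]

lemma covariance_eq_inner_toLp {X Y : Ω → ℝ} (hX : MemLp X 2 μ) (hY : MemLp Y 2 μ) :
    cov[X, Y; μ] =
      inner ℝ (hX.sub (memLp_const μ[X])).toLp (hY.sub (memLp_const μ[Y])).toLp := by
  rw [L2.inner_def]
  refine integral_congr_ae ?_
  filter_upwards [(hX.sub (memLp_const μ[X])).coeFn_toLp, (hY.sub (memLp_const μ[Y])).coeFn_toLp]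
    with ω hXω hYω
  rw [hXω, hYω]
  simp [mul_comm]

-- Projecting in `L²` instead of inverting the covariance matrix of `Y` allows it to be singular.
lemma exists_crossCov_sub_mulVec_eq_zero [Fintype ι] [Fintype κ] {X : Ω → ι → ℝ}
    {Y : Ω → κ → ℝ} (hX : MemLp X 2 μ) (hY : MemLp Y 2 μ) :
    ∃ A : Matrix ι κ ℝ, crossCov μ (X - fun ω ↦ A *ᵥ Y ω) Y = 0 := by
  have hrow (i : ι) := exists_forall_inner_sub_sum_smul_eq_zero (𝕜 := ℝ)
    ((hX.eval i).sub (memLp_const μ[(X · i)])).toLp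
    fun j ↦ ((hY.eval j).sub (memLp_const μ[(Y · j)])).toLp
  choose A hA using hrow
  refine ⟨of A, ?_⟩
  rw [crossCov_sub_left hX (memLp_mulVec _ hY) hY, crossCov_mulVec_left _ hY hY]
  ext i j
  change cov[(X · i), (Y · j); μ] - ∑ k, A i k * cov[(Y · k), (Y · j); μ] = 0
  simpa only [covariance_eq_inner_toLp (hX.eval i) (hY.eval j),
    fun k ↦ covariance_eq_inner_toLp (hY.eval k) (hY.eval j), inner_sub_left, sum_inner,
    real_inner_smul_left] using hA i j

end LinearRegression

section Innovation

lemma covariance_sub_condExp_eq_zero [IsProbabilityMeasure μ] {m : MeasurableSpace Ω} (hm : m ≤ mΩ)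
    {f g : Ω → ℝ} (hf : MemLp f 2 μ) (hg : MemLp g 2 μ) (hgm : AEStronglyMeasurable[m] g μ) :
    cov[f - μ[f | m], g; μ] = 0 := by
  have hf' : MemLp (μ[f | m]) 2 μ := hf.condExp one_le_two
  have hmul : μ[f * g] = μ[μ[f | m] * g] := by
    rw [← integral_condExp hm]
    exact integral_congr_ae <| condExp_mul_of_aestronglyMeasurable_right hgm
      (hf.integrable_mul hg) (hf.integrable one_le_two)
  rw [covariance_sub_left hf hf' hg, covariance_eq_sub hf hg, covariance_eq_sub hf' hg, hmul,
    integral_condExp hm, sub_self]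

variable {E : Type*} [MeasurableSpace E] {Y₀ : Ω → E} {X : Ω → ι → ℝ} {Y : Ω → κ → ℝ}

lemma measurable_innovation_iff {m : MeasurableSpace Ω} (hY₀ : Measurable[m] Y₀) :
    Measurable[m] (innovation μ Y₀ Y) ↔ Measurable[m] Y := by
  have hcondExp (j : κ) :
      Measurable[m] (μ[(Y · j) | MeasurableSpace.comap Y₀ inferInstance]) :=
    (stronglyMeasurable_condExp.mono hY₀.comap_le).measurable
  simp only [measurable_pi_iff]
  refine forall_congr' fun j ↦ ⟨fun h ↦ ?_, fun h ↦ h.sub (hcondExp j)⟩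
  simpa [innovation] using h.fun_add (hcondExp j)

lemma comap_prodMk_innovation :
    MeasurableSpace.comap (fun ω ↦ (Y₀ ω, innovation μ Y₀ Y ω)) inferInstance =
      MeasurableSpace.comap (fun ω ↦ (Y₀ ω, Y ω)) inferInstance := by
  refine le_antisymm ?_ ?_
  · have hZ := comap_measurable (m := inferInstance) fun ω ↦ (Y₀ ω, Y ω)
    exact (hZ.fst.prodMk ((measurable_innovation_iff hZ.fst).2 hZ.snd)).comap_le
  · have hZ := comap_measurable (m := inferInstance) fun ω ↦ (Y₀ ω, innovation μ Y₀ Y ω)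
    exact (hZ.fst.prodMk ((measurable_innovation_iff hZ.fst).1 hZ.snd)).comap_le

lemma integral_innovation [IsFiniteMeasure μ] [Fintype κ] (hY₀ : Measurable Y₀)
    (hY : Integrable Y μ) (j : κ) : ∫ ω, innovation μ Y₀ Y ω j ∂μ = 0 := by
  simp only [innovation]
  rw [integral_sub (hY.eval j) integrable_condExp, integral_condExp hY₀.comap_le, sub_self]

variable [Fintype κ]

lemma memLp_innovation [IsFiniteMeasure μ] {p : ENNReal} (hp : 1 ≤ p) (hY : MemLp Y p μ) :
    MemLp (innovation μ Y₀ Y) p μ :=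
  .of_eval fun j ↦ (hY.eval j).sub ((hY.eval j).condExp hp)

variable [IsProbabilityMeasure μ] [Fintype ι]

lemma crossCov_innovation_self {Y₀ : Ω → ι → ℝ} (hY₀ : Measurable Y₀) (hY₀L : MemLp Y₀ 2 μ)
    (hY : MemLp Y 2 μ) : crossCov μ (innovation μ Y₀ Y) Y₀ = 0 :=
  Matrix.ext fun j i ↦ covariance_sub_condExp_eq_zero hY₀.comap_le (hY.eval j) (hY₀L.eval i)
    ((measurable_pi_apply i).comp (comap_measurable Y₀)).aestronglyMeasurable

lemma crossCov_innovation_innovation (hY₀ : Measurable Y₀) (hX : MemLp X 2 μ) (hY : MemLp Y 2 μ) :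
    crossCov μ (innovation μ Y₀ X) (innovation μ Y₀ Y) = crossCov μ X (innovation μ Y₀ Y) := by
  ext i j
  let xhat := μ[(X · i) | MeasurableSpace.comap Y₀ inferInstance]
  have hxhat : MemLp xhat 2 μ := (hX.eval i).condExp one_le_two
  have horth : cov[xhat, (innovation μ Y₀ Y · j); μ] = 0 := by
    rw [covariance_comm]
    exact covariance_sub_condExp_eq_zero hY₀.comap_le (hY.eval j) hxhat
      stronglyMeasurable_condExp.aestronglyMeasurable
  calc cov[fun ω ↦ X ω i - xhat ω, (innovation μ Y₀ Y · j); μ]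
      = cov[(X · i), (innovation μ Y₀ Y · j); μ] - cov[xhat, (innovation μ Y₀ Y · j); μ] :=
        covariance_fun_sub_left (hX.eval i) hxhat ((memLp_innovation one_le_two hY).eval j)
    _ = cov[(X · i), (innovation μ Y₀ Y · j); μ] := by rw [horth, sub_zero]

lemma crossCov_innovation_right_apply (hY₀ : Measurable Y₀) (hX : MemLp X 2 μ) (hY : MemLp Y 2 μ)
    (i : ι) (j : κ) :
    crossCov μ X (innovation μ Y₀ Y) i j = ∫ ω, X ω i * innovation μ Y₀ Y ω j ∂μ := by
  rw [crossCov, of_apply, covariance_eq_sub (hX.eval i) ((memLp_innovation one_le_two hY).eval j),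
    integral_innovation hY₀ (hY.integrable one_le_two), mul_zero, sub_zero]
  rfl

end Innovation

lemma condExp_comap_ae_eq_of_indepFun_sub_s7 {E : Type*} [MeasurableSpace E] [IsProbabilityMeasure μ]
    {Z : Ω → E} {f g : Ω → ℝ} (hZ : Measurable Z) (hf : Measurable f) (hfi : Integrable f μ)
    (hg : Measurable[MeasurableSpace.comap Z inferInstance] g) (hgi : Integrable g μ)
    (hindep : IndepFun (f - g) Z μ) (hmean : μ[f - g] = 0) :
    μ[f | MeasurableSpace.comap Z inferInstance] =ᵐ[μ] g := by
  have hsub : μ[f - g | MeasurableSpace.comap Z inferInstance] =ᵐ[μ] fun _ ↦ μ[f - g] :=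
    condExp_indep_eq (hf.sub (hg.mono hZ.comap_le le_rfl)).comap_le hZ.comap_le
      (comap_measurable (f - g)).stronglyMeasurable hindep
  have hg_self : μ[g | MeasurableSpace.comap Z inferInstance] = g :=
    condExp_of_stronglyMeasurable hZ.comap_le hg.stronglyMeasurable hgi
  filter_upwards [hsub, condExp_sub hfi hgi (MeasurableSpace.comap Z inferInstance)]
    with ω hsubω hlin
  rw [hsubω, hmean, hg_self, Pi.sub_apply] at hlin
  exact sub_eq_zero.1 hlin.symm

section Gaussian

lemma hasGaussianLaw_sub_const {E : Type*} [NormedAddCommGroup E] [NormedSpace ℝ E]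
    [MeasurableSpace E] [BorelSpace E] {X : Ω → E} (hX : HasGaussianLaw X μ) (c : E) :
    HasGaussianLaw (fun ω ↦ X ω - c) μ where
  isGaussian_map := by
    have := hX.isGaussian_map
    have hmap : μ.map (fun ω ↦ X ω - c) = (μ.map X).map (· - c) :=
      (AEMeasurable.map_map_of_aemeasurable (measurable_sub_const c).aemeasurable
        hX.aemeasurable).symm
    rw [hmap]
    infer_instance

lemma hasGaussianLaw_of_forall_map_dotProduct [Fintype ι] [Fintype κ] [Fintype η]
    {X : Ω → ι → ℝ} {Y : Ω → κ → ℝ} {Z : Ω → η → ℝ}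
    (hX : Measurable X) (hY : Measurable Y) (hZ : Measurable Z)
    (h : ∀ (a : ι → ℝ) (b : κ → ℝ) (c : η → ℝ), ∃ m v,
      μ.map (fun ω ↦ a ⬝ᵥ X ω + b ⬝ᵥ Y ω + c ⬝ᵥ Z ω) = gaussianReal m v) :
    HasGaussianLaw (fun ω ↦ (X ω, Y ω, Z ω)) μ where
  isGaussian_map := by
    classical
    refine isGaussian_of_map_eq_gaussianReal fun L ↦ ?_
    obtain ⟨a, ha⟩ := (dotProductEquiv ℝ ι).surjective (L ∘L .inl ℝ _ _).toLinearMap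
    obtain ⟨b, hb⟩ :=
      (dotProductEquiv ℝ κ).surjective (L ∘L .inr ℝ _ _ ∘L .inl ℝ _ _).toLinearMap
    obtain ⟨c, hc⟩ :=
      (dotProductEquiv ℝ η).surjective (L ∘L .inr ℝ _ _ ∘L .inr ℝ _ _).toLinearMap
    have hL (x : ι → ℝ) (y : κ → ℝ) (z : η → ℝ) :
        L (x, y, z) = a ⬝ᵥ x + b ⬝ᵥ y + c ⬝ᵥ z := by
      calc L (x, y, z) = L (x, 0) + L (0, y, 0) + L (0, 0, z) := by simp [← map_add]
        _ = a ⬝ᵥ x + b ⬝ᵥ y + c ⬝ᵥ z :=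
          congr_arg₂ _ (congr_arg₂ _ (DFunLike.congr_fun ha x).symm
            (DFunLike.congr_fun hb y).symm) (DFunLike.congr_fun hc z).symm
    obtain ⟨m, v, hmv⟩ := h a b c
    refine ⟨m, v, ?_⟩
    rw [Measure.map_map L.continuous.measurable (hX.prodMk (hY.prodMk hZ)), ← hmv]
    exact congr_arg (μ.map ·) (funext fun ω ↦ hL (X ω) (Y ω) (Z ω))

variable [Finite ι]

lemma indepFun_of_crossCov_eq_zero [Finite κ] {R : Ω → ι → ℝ} {Y : Ω → κ → ℝ}
    (hG : HasGaussianLaw (fun ω ↦ (R ω, Y ω)) μ) (h : crossCov μ R Y = 0) : IndepFun R Y μ :=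
  have := Fintype.ofFinite ι
  have := Fintype.ofFinite κ
  HasGaussianLaw.indepFun_of_covariance_eval (X := fun i ω ↦ R ω i) (Y := fun j ω ↦ Y ω j) hG
    fun i j ↦ congr_fun₂ h i j

lemma indepFun_prodMk_of_crossCov_eq_zero [Finite κ] [Finite η] {R : Ω → ι → ℝ} {Y : Ω → κ → ℝ}
    {Z : Ω → η → ℝ}
    (hG : HasGaussianLaw (fun ω ↦ (R ω, Y ω, Z ω)) μ) (hY : crossCov μ R Y = 0)
    (hZ : crossCov μ R Z = 0) : IndepFun R (fun ω ↦ (Y ω, Z ω)) μ := by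
  have := Fintype.ofFinite ι
  have := Fintype.ofFinite κ
  have := Fintype.ofFinite η
  let e := ContinuousLinearEquiv.sumPiEquivProdPi ℝ κ η fun _ ↦ ℝ
  have hGe : HasGaussianLaw (fun ω ↦ (R ω, e.symm (Y ω, Z ω))) μ :=
    hG.map_equiv_fun ((ContinuousLinearEquiv.refl ℝ (ι → ℝ)).prodCongr e.symm)
  have hcov : crossCov μ R (fun ω ↦ e.symm (Y ω, Z ω)) = 0 := by
    ext i (j | j)
    · exact congr_fun₂ hY i j
    · exact congr_fun₂ hZ i j
  exact (indepFun_of_crossCov_eq_zero hGe hcov).comp measurable_id e.continuous.measurable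

lemma exists_innovation_ae_eq [Fintype κ] {X : Ω → ι → ℝ} {Y₀ : Ω → κ → ℝ}
    (hX : Measurable X) (hY₀ : Measurable Y₀) (hG : HasGaussianLaw (fun ω ↦ (X ω, Y₀ ω)) μ) :
    ∃ (A : Matrix ι κ ℝ) (b : ι → ℝ), innovation μ Y₀ X =ᵐ[μ] fun ω ↦ X ω - A *ᵥ Y₀ ω - b := by
  have := Fintype.ofFinite ι
  have := hG.isProbabilityMeasure
  obtain ⟨A, hA⟩ := exists_crossCov_sub_mulVec_eq_zero hG.fst.memLp_two hG.snd.memLp_two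
  let R : Ω → ι → ℝ := X - fun ω ↦ A *ᵥ Y₀ ω
  let b : ι → ℝ := fun i ↦ μ[(R · i)]
  let L := A.mulVecLin.toContinuousLinearMap
  have hRG : HasGaussianLaw (fun ω ↦ (R ω, Y₀ ω)) μ :=
    hG.map_fun ((ContinuousLinearMap.fst ℝ _ _ - L ∘L .snd ℝ _ _).prod (.snd ℝ _ _))
  have hindep : IndepFun R Y₀ μ := indepFun_of_crossCov_eq_zero hRG hA
  have hcondExp (i : ι) : μ[(X · i) | MeasurableSpace.comap Y₀ inferInstance]
      =ᵐ[μ] fun ω ↦ (A *ᵥ Y₀ ω) i + b i := by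
    have hAY : Integrable (fun ω ↦ (A *ᵥ Y₀ ω) i) μ :=
      (L.integrable_comp hG.snd.integrable).eval i
    have hsub : (X · i) - (fun ω ↦ (A *ᵥ Y₀ ω) i + b i) = fun ω ↦ R ω i - b i := by
      ext ω
      simp [R, sub_sub]
    refine condExp_comap_ae_eq_of_indepFun_sub_s7 hY₀ ((measurable_pi_apply i).comp hX)
      (hG.fst.integrable.eval i) ?_ (hAY.add (integrable_const _)) ?_ ?_
    · exact (((continuous_apply i).comp L.continuous).measurable.comp
        (comap_measurable Y₀)).add_const _
    · rw [hsub]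
      exact hindep.comp ((measurable_pi_apply i).sub_const (b i)) measurable_id
    · rw [hsub, integral_sub (hRG.fst.integrable.eval i) (integrable_const _)]
      simp [b]
  refine ⟨A, b, ?_⟩
  filter_upwards [ae_all_iff.2 hcondExp] with ω hω
  ext i
  simp [innovation, hω, sub_sub]

variable [Finite κ] {X : Ω → ι → ℝ} {Y₀ : Ω → κ → ℝ} {Y : Ω → η → ℝ}

lemma hasGaussianLaw_innovation [Finite η] (hX : Measurable X) (hY₀ : Measurable Y₀)
    (hY : Measurable Y) (hG : HasGaussianLaw (fun ω ↦ (X ω, Y₀ ω, Y ω)) μ) :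
    HasGaussianLaw (fun ω ↦ (innovation μ Y₀ X ω, Y₀ ω, innovation μ Y₀ Y ω)) μ := by
  have := Fintype.ofFinite ι
  have := Fintype.ofFinite κ
  have := Fintype.ofFinite η
  have hXY₀ : HasGaussianLaw (fun ω ↦ (X ω, Y₀ ω)) μ :=
    hG.map_fun ((ContinuousLinearMap.fst ℝ _ _).prod (.fst ℝ _ _ ∘L .snd ℝ _ _))
  have hYY₀ : HasGaussianLaw (fun ω ↦ (Y ω, Y₀ ω)) μ :=
    hG.snd.map_fun ((ContinuousLinearMap.snd ℝ _ _).prod (.fst ℝ _ _))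
  obtain ⟨A, a, hA⟩ := exists_innovation_ae_eq hX hY₀ hXY₀
  obtain ⟨B, b, hB⟩ := exists_innovation_ae_eq hY hY₀ hYY₀
  let y₀ := ContinuousLinearMap.fst ℝ (κ → ℝ) (η → ℝ) ∘L .snd ℝ (ι → ℝ) _
  let L := (.fst ℝ _ _ - A.mulVecLin.toContinuousLinearMap ∘L y₀).prod
    (y₀.prod (.snd ℝ _ _ ∘L .snd ℝ _ _ - B.mulVecLin.toContinuousLinearMap ∘L y₀))
  refine (hasGaussianLaw_sub_const (hG.map_fun L) (a, 0, b)).congr ?_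
  filter_upwards [hA, hB] with ω hAω hBω
  simp [hAω, hBω, L, y₀]

variable [Fintype η]

lemma indepFun_innovation_sub_mulVec (hX : Measurable X) (hY₀ : Measurable Y₀) (hY : Measurable Y)
    (hG : HasGaussianLaw (fun ω ↦ (X ω, Y₀ ω, Y ω)) μ) {K : Matrix ι η ℝ}
    (hK : K * crossCov μ (innovation μ Y₀ Y) (innovation μ Y₀ Y) =
      crossCov μ X (innovation μ Y₀ Y)) :
    IndepFun (innovation μ Y₀ X - fun ω ↦ K *ᵥ innovation μ Y₀ Y ω)
      (fun ω ↦ (Y₀ ω, innovation μ Y₀ Y ω)) μ := by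
  have := Fintype.ofFinite ι
  have := Fintype.ofFinite κ
  have := hG.isProbabilityMeasure
  have hXL : MemLp X 2 μ := hG.fst.memLp_two
  have hY₀L : MemLp Y₀ 2 μ := hG.snd.fst.memLp_two
  have hYL : MemLp Y 2 μ := hG.snd.snd.memLp_two
  have hX'L : MemLp (innovation μ Y₀ X) 2 μ := memLp_innovation one_le_two hXL
  have hY'L : MemLp (innovation μ Y₀ Y) 2 μ := memLp_innovation one_le_two hYL
  refine indepFun_prodMk_of_crossCov_eq_zero ?_ ?_ ?_
  · let L := (ContinuousLinearMap.fst ℝ (ι → ℝ) ((κ → ℝ) × (η → ℝ))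
      - K.mulVecLin.toContinuousLinearMap ∘L .snd ℝ _ _ ∘L .snd ℝ _ _).prod (.snd ℝ _ _)
    exact (hasGaussianLaw_innovation hX hY₀ hY hG).map_fun L
  · rw [crossCov_sub_left hX'L (memLp_mulVec K hY'L) hY₀L, crossCov_mulVec_left K hY'L hY₀L,
      crossCov_innovation_self hY₀ hY₀L hXL, crossCov_innovation_self hY₀ hY₀L hYL,
      Matrix.mul_zero, sub_zero]
  · rw [crossCov_sub_left hX'L (memLp_mulVec K hY'L) hY'L, crossCov_mulVec_left K hY'L hY'L,
      crossCov_innovation_innovation hY₀ hXL hYL, hK, sub_self]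

theorem stmt7_general (hX : Measurable X) (hY₀ : Measurable Y₀) (hY : Measurable Y)
    (hG : HasGaussianLaw (fun ω ↦ (X ω, Y₀ ω, Y ω)) μ) {K : Matrix ι η ℝ}
    (hK : K * crossCov μ (innovation μ Y₀ Y) (innovation μ Y₀ Y) =
      crossCov μ X (innovation μ Y₀ Y)) (i : ι) :
    μ[(X · i) | MeasurableSpace.comap (fun ω ↦ (Y₀ ω, Y ω)) inferInstance] =ᵐ[μ] fun ω ↦
      (μ[(X · i) | MeasurableSpace.comap Y₀ inferInstance]) ω
        + (K *ᵥ innovation μ Y₀ Y ω) i := by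
  have := Fintype.ofFinite ι
  have := Fintype.ofFinite κ
  have := hG.isProbabilityMeasure
  have hY' : Integrable (innovation μ Y₀ Y) μ :=
    (memLp_innovation one_le_two hG.snd.snd.memLp_two).integrable one_le_two
  have hX'i : Integrable (innovation μ Y₀ X · i) μ :=
    ((memLp_innovation one_le_two hG.fst.memLp_two).integrable one_le_two).eval i
  have hKY' : Integrable (fun ω ↦ (K *ᵥ innovation μ Y₀ Y ω) i) μ :=
    (K.mulVecLin.toContinuousLinearMap.integrable_comp hY').eval i
  have hresidual : (X · i) - (fun ω ↦ (μ[(X · i) | MeasurableSpace.comap Y₀ inferInstance]) ω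
      + (K *ᵥ innovation μ Y₀ Y ω) i) =
      fun ω ↦ innovation μ Y₀ X ω i - (K *ᵥ innovation μ Y₀ Y ω) i := by
    ext ω
    simp [innovation, sub_sub]
  have hZ : Measurable fun ω ↦ (Y₀ ω, innovation μ Y₀ Y ω) :=
    hY₀.prodMk ((measurable_innovation_iff hY₀).2 hY)
  rw [← comap_prodMk_innovation]
  refine condExp_comap_ae_eq_of_indepFun_sub_s7 hZ ((measurable_pi_apply i).comp hX)
    (hG.fst.integrable.eval i) ?_ (integrable_condExp.add hKY') ?_ ?_
  · have hZ' := comap_measurable (m := inferInstance) fun ω ↦ (Y₀ ω, innovation μ Y₀ Y ω)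
    have hK_meas : Measurable fun z : η → ℝ ↦ (K *ᵥ z) i := by fun_prop
    exact (stronglyMeasurable_condExp.mono hZ'.fst.comap_le).measurable.add
      (hK_meas.comp hZ'.snd)
  · rw [hresidual]
    exact (indepFun_innovation_sub_mulVec hX hY₀ hY hG hK).comp (measurable_pi_apply i)
      measurable_id
  · rw [hresidual, integral_sub hX'i hKY', integral_innovation hY₀ hG.fst.integrable,
      integral_mulVec K hY']
    simp [integral_innovation hY₀ hG.snd.snd.integrable, mulVec, dotProduct]

end Gaussian

end Development

/-- Let `(x, y₀, y₁, …, yₙ)` be jointly Gaussian zero-mean random vectors with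
`Cov(y₀,y₀)` invertible, `x̂₀ = E[x | y₀]`, `ỹᵢ = yᵢ − E[yᵢ | y₀]`, `Θ̂ᵢ = Cov(x, ỹᵢ)`,
`Σ̂ᵢᵢ = Cov(ỹᵢ, ỹᵢ)`. If `Σ̂ᵢᵢ` is invertible, then
`E[x | y₀, yᵢ] = x̂₀ + Θ̂ᵢ Σ̂ᵢᵢ⁻¹ ỹᵢ` almost surely. -/
theorem stmt7 {Ω : Type*} [MeasurableSpace Ω] (μ : Measure Ω) [IsProbabilityMeasure μ]
    (dx q n : ℕ) (dy : Fin n → ℕ)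
    (x : Ω → Fin dx → ℝ) (y0 : Ω → Fin q → ℝ) (y : ∀ i : Fin n, Ω → Fin (dy i) → ℝ)
    (hx : Measurable x) (hy0 : Measurable y0) (hy : ∀ i, Measurable (y i))
    (hGauss : ∀ (a : Fin dx → ℝ) (b0 : Fin q → ℝ) (b : ∀ i, Fin (dy i) → ℝ),
      ∃ v : NNReal,
        μ.map (fun ω => (∑ k, a k * x ω k) + (∑ k, b0 k * y0 ω k)
          + ∑ i, ∑ k, b i k * y i ω k) = gaussianReal 0 v)
    (Sigma00 : Matrix (Fin q) (Fin q) ℝ)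
    (hSigma00 : ∀ k l, Sigma00 k l = ∫ ω, y0 ω k * y0 ω l ∂μ)
    (hinv0 : IsUnit Sigma00.det)
    (xhat0 : Ω → Fin dx → ℝ)
    (hxhat0 : xhat0 = fun ω k =>
      (μ[(fun ω => x ω k) | MeasurableSpace.comap y0 inferInstance]) ω)
    (yhat : ∀ i : Fin n, Ω → Fin (dy i) → ℝ)
    (hyhat : ∀ i, yhat i = fun ω k =>
      (μ[(fun ω => y i ω k) | MeasurableSpace.comap y0 inferInstance]) ω)
    (Θhat : ∀ i, Matrix (Fin dx) (Fin (dy i)) ℝ)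
    (hΘhat : ∀ i k l, Θhat i k l = ∫ ω, x ω k * (y i ω l - yhat i ω l) ∂μ)
    (Sigmahat : ∀ i j, Matrix (Fin (dy i)) (Fin (dy j)) ℝ)
    (hSigmahat : ∀ i j k l, Sigmahat i j k l
      = ∫ ω, (y i ω k - yhat i ω k) * (y j ω l - yhat j ω l) ∂μ)
    (hinv : ∀ i, IsUnit (Sigmahat i i).det) :
    ∀ i k,
      (μ[(fun ω => x ω k) |
          MeasurableSpace.comap (fun ω => (y0 ω, y i ω)) inferInstance])
        =ᵐ[μ] fun ω =>
          xhat0 ω k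
            + (Θhat i * (Sigmahat i i)⁻¹).mulVec (fun l => y i ω l - yhat i ω l) k := by
  intro i k
  subst hxhat0
  obtain rfl : yhat = _ := funext hyhat
  have hG : HasGaussianLaw (fun ω ↦ (x ω, y0 ω, y i ω)) μ := by
    refine hasGaussianLaw_of_forall_map_dotProduct hx hy0 (hy i) fun a b0 c ↦ ?_
    obtain ⟨v, hv⟩ := hGauss a b0 (Pi.single i c)
    have hc (ω : Ω) :
        ∑ j, Pi.single (M := fun j ↦ Fin (dy j) → ℝ) i c j ⬝ᵥ y j ω = c ⬝ᵥ y i ω := by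
      rw [Fintype.sum_eq_single i fun j hj ↦ by simp [hj], Pi.single_eq_same]
    exact ⟨0, v, by simpa only [hc, ← dotProduct.eq_def] using hv⟩
  have hyL : MemLp (y i) 2 μ := hG.snd.snd.memLp_two
  have hTheta : Θhat i = crossCov μ x (innovation μ y0 (y i)) := Matrix.ext fun k l ↦ by
    rw [hΘhat, crossCov_innovation_right_apply hy0 hG.fst.memLp_two hyL]
    rfl
  have hSigma : Sigmahat i i = crossCov μ (innovation μ y0 (y i)) (innovation μ y0 (y i)) :=
    Matrix.ext fun k l ↦ by
      rw [hSigmahat, crossCov_innovation_right_apply hy0 (memLp_innovation one_le_two hyL) hyL]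
      rfl
  refine stmt7_general hx hy0 (hy i) hG ?_ k
  rw [← hTheta, ← hSigma, nonsing_inv_mul_cancel_right _ _ (hinv i)]
end

section
/- Let n ∈ ℕ and let S = [S_ij]_{i,j=1}^n and P = [P_ij]_{i,j=1}^n be symmetric block matrices with blocks S_ij ∈ ℝ^{m_i × m_j} and P_ij ∈ ℝ^{p_i × p_j}. If S is positive definite, P is positive semi-definite, and each diagonal block P_ii is positive definite, then the block matrix Γ = [Γ_ij] with Γ_ij = P_ij ⊗ S_ij (Kronecker product) is positive definite; consequently, for any matrices L_j ∈ ℝ^{m_j × d}, the system Σ_{j=1}^n ( S_ij F_j P_ji − S_ij L_j P_ii ) = 0, i ∈ {1,…,n}, has the unique solution vec(F_1,…,F_n) = Γ⁻¹ η, where η = vec(S_{1•} L P_11, …, S_{n•} L P_nn) and S_{i•} L = Σ_j S_ij L_j. -/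
open Matrix

/-!
`Γ` is the Khatri–Rao product of `P` and `S`: the principal submatrix of `P ⊗ S` on the index pairs
whose two entries lie in the same block. Hence it is positive semidefinite as soon as `P` and `S`
are. Positive definiteness of `S` gives `r > 0` with `S - r • 1` positive semidefinite, and `Γ` is
then the sum of the Khatri–Rao product of `P` and `S - r • 1` and of `r` times that of `P` and `1`.
The latter is block diagonal with blocks `Pᵢᵢ ⊗ 1`, which are positive definite. The linear system
is `Γ vec(F) = η` because `vec (B X Aᵀ) = (A ⊗ B) vec X`.
-/

open scoped Kronecker

section KhatriRao

variable {ι κ α : Type*} {l m : ι → Type*} {p q : κ → Type*}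

/-- The `(i, j)` block of a block matrix. -/
def sigmaBlock (A : Matrix (Σ i, l i) (Σ j, p j) α) (i : ι) (j : κ) : Matrix (l i) (p j) α :=
  A.submatrix (Sigma.mk i) (Sigma.mk j)

/-- The vector obtained by stacking the column-by-column vectorizations `vec (X i)`, in the index
order that matches the rows of a Khatri–Rao product. -/
def blockVec (X : ∀ i, Matrix (m i) (l i) α) : (Σ i, l i × m i) → α :=
  fun x => vec (X x.1) x.2

theorem blockVec_injective :
    Function.Injective (blockVec : (∀ i, Matrix (m i) (l i) α) → (Σ i, l i × m i) → α) :=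
  fun _ _ h => funext fun i => vec_inj.mp <| funext fun k => congrFun h ⟨i, k⟩

/-- The Khatri–Rao product of two block matrices, whose `(i, j)` block is the Kronecker product of
the `(i, j)` blocks of the factors. It is encoded as the submatrix of the full Kronecker product
that keeps only the pairs of indices lying in the same block. -/
def khatriRao [Mul α] (A : Matrix (Σ i, l i) (Σ j, p j) α) (B : Matrix (Σ i, m i) (Σ j, q j) α) :
    Matrix (Σ i, l i × m i) (Σ j, p j × q j) α :=
  (A ⊗ₖ B).submatrix (fun x => (⟨x.1, x.2.1⟩, ⟨x.1, x.2.2⟩)) fun x => (⟨x.1, x.2.1⟩, ⟨x.1, x.2.2⟩)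

theorem sigmaBlock_khatriRao [Mul α] (A : Matrix (Σ i, l i) (Σ j, p j) α)
    (B : Matrix (Σ i, m i) (Σ j, q j) α) (i : ι) (j : κ) :
    sigmaBlock (khatriRao A B) i j = sigmaBlock A i j ⊗ₖ sigmaBlock B i j :=
  rfl

theorem khatriRao_add [NonUnitalNonAssocSemiring α] (A : Matrix (Σ i, l i) (Σ j, p j) α)
    (B C : Matrix (Σ i, m i) (Σ j, q j) α) :
    khatriRao A (B + C) = khatriRao A B + khatriRao A C := by
  simp only [khatriRao, kronecker_add, submatrix_add, Pi.add_apply]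

theorem khatriRao_smul {R : Type*} [Mul α] [SMul R α] [SMulCommClass R α α] (r : R)
    (A : Matrix (Σ i, l i) (Σ j, p j) α) (B : Matrix (Σ i, m i) (Σ j, q j) α) :
    khatriRao A (r • B) = r • khatriRao A B := by
  ext x y
  exact mul_smul_comm r _ _

theorem khatriRao_one [DecidableEq ι] [∀ i, DecidableEq (m i)] [MulZeroOneClass α]
    (A : Matrix (Σ i, l i) (Σ i, l i) α) :
    khatriRao A (1 : Matrix (Σ i, m i) (Σ i, m i) α) =
      blockDiagonal' fun i => blockDiag' A i ⊗ₖ (1 : Matrix (m i) (m i) α) := by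
  ext ⟨i, a, b⟩ ⟨j, a', b'⟩
  obtain rfl | hij := eq_or_ne i j
  · simp [khatriRao, one_apply, blockDiag'_apply]
  · simp [khatriRao, one_apply, hij, blockDiagonal'_apply_ne]

theorem sigma_mulVec_apply [NonUnitalNonAssocSemiring α] [Fintype κ] [∀ j, Fintype (p j)]
    (A : Matrix (Σ i, l i) (Σ j, p j) α) (v : (Σ j, p j) → α) (i : ι) (a : l i) :
    (A *ᵥ v) ⟨i, a⟩ = (∑ j, sigmaBlock A i j *ᵥ fun b => v ⟨j, b⟩) a := by
  rw [Finset.sum_apply]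
  exact Fintype.sum_sigma _

theorem khatriRao_mulVec_blockVec [NonUnitalCommSemiring α] [Fintype κ] [∀ j, Fintype (p j)]
    [∀ j, Fintype (q j)] (A : Matrix (Σ i, l i) (Σ j, p j) α)
    (B : Matrix (Σ i, m i) (Σ j, q j) α) (X : ∀ j, Matrix (q j) (p j) α) :
    khatriRao A B *ᵥ blockVec X =
      blockVec fun i => ∑ j, sigmaBlock B i j * X j * (sigmaBlock A i j)ᵀ := by
  ext ⟨i, a⟩
  calc (khatriRao A B *ᵥ blockVec X) ⟨i, a⟩
      = (∑ j, sigmaBlock (khatriRao A B) i j *ᵥ vec (X j)) a :=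
        sigma_mulVec_apply (khatriRao A B) (blockVec X) i a
    _ = vec (∑ j, sigmaBlock B i j * X j * (sigmaBlock A i j)ᵀ) a := by
        simp only [sigmaBlock_khatriRao, kronecker_mulVec_vec, vec_sum]

end KhatriRao

theorem mulVec_eq_iff_eq_inv_mulVec {n R : Type*} [Fintype n] [DecidableEq n] [CommRing R]
    {A : Matrix n n R} (hA : IsUnit A) {x y : n → R} : A *ᵥ x = y ↔ x = A⁻¹ *ᵥ y := by
  let := hA.invertible
  refine ⟨fun h => (inv_mulVec_eq_vec h.symm).symm, ?_⟩
  rintro rfl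
  rw [mulVec_mulVec, mul_inv_of_invertible, one_mulVec]

theorem blockDiagonal'_mulVec_apply {ι R : Type*} {m n : ι → Type*} [Fintype ι] [DecidableEq ι]
    [∀ i, Fintype (n i)] [NonUnitalNonAssocSemiring R] (M : ∀ i, Matrix (m i) (n i) R)
    (v : (Σ i, n i) → R) (i : ι) (a : m i) :
    (blockDiagonal' M *ᵥ v) ⟨i, a⟩ = (M i *ᵥ fun b => v ⟨i, b⟩) a := by
  rw [sigma_mulVec_apply, Finset.sum_apply, Fintype.sum_eq_single i]
  · simp only [sigmaBlock, mulVec, submatrix_apply, blockDiagonal'_apply_eq, dotProduct]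
  · intro j hij
    simp [sigmaBlock, mulVec, dotProduct, blockDiagonal'_apply_ne M _ _ hij.symm]

theorem posDef_blockDiagonal' {ι R : Type*} {m : ι → Type*} [Finite ι] [DecidableEq ι]
    [∀ i, Finite (m i)] [Ring R] [PartialOrder R] [StarRing R] [IsOrderedCancelAddMonoid R]
    {M : ∀ i, Matrix (m i) (m i) R} (hM : ∀ i, (M i).PosDef) : (blockDiagonal' M).PosDef := by
  have := Fintype.ofFinite ι
  have (i : ι) := Fintype.ofFinite (m i)
  have hherm : (blockDiagonal' M).IsHermitian := by
    rw [IsHermitian, blockDiagonal'_conjTranspose]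
    exact congrArg blockDiagonal' <| funext fun i => (hM i).isHermitian
  refine .of_dotProduct_mulVec_pos hherm fun x hx => ?_
  have hsum : star x ⬝ᵥ (blockDiagonal' M *ᵥ x) =
      ∑ i, star (fun a => x ⟨i, a⟩) ⬝ᵥ (M i *ᵥ fun a => x ⟨i, a⟩) := by
    simp only [dotProduct, Fintype.sum_sigma, blockDiagonal'_mulVec_apply, Pi.star_apply]
  obtain ⟨⟨i, a⟩, hia⟩ := Function.ne_iff.mp hx
  rw [hsum]
  exact Finset.sum_pos' (fun j _ => (hM j).posSemidef.dotProduct_mulVec_nonneg _)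
    ⟨i, Finset.mem_univ i, (hM i).dotProduct_mulVec_pos fun h => hia (congrFun h a)⟩

section PosDef

open scoped ComplexOrder

open scoped MatrixOrder in
theorem exists_pos_posSemidef_sub_smul_one {n 𝕜 : Type*} [RCLike 𝕜] [Finite n] [DecidableEq n]
    {A : Matrix n n 𝕜} (hA : A.PosDef) : ∃ r : ℝ, 0 < r ∧ (A - r • 1).PosSemidef := by
  have := Fintype.ofFinite n
  obtain _ | _ := subsingleton_or_nontrivial (Matrix n n 𝕜)
  · exact ⟨1, one_pos, by simpa only [Subsingleton.elim (A - _) 0] using PosSemidef.zero⟩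
  · obtain ⟨r, hr, hle⟩ := (CFC.exists_pos_algebraMap_le_iff hA.isHermitian).mpr
      fun _ hx => hA.isStrictlyPositive.spectrum_pos hx
    exact ⟨r, hr, by rwa [Algebra.algebraMap_eq_smul_one] at hle⟩

variable {𝕜 ι : Type*} [RCLike 𝕜] {l m : ι → Type*}

theorem posSemidef_khatriRao [Finite ι] [∀ i, Finite (l i)] [∀ i, Finite (m i)]
    {A : Matrix (Σ i, l i) (Σ i, l i) 𝕜} {B : Matrix (Σ i, m i) (Σ i, m i) 𝕜}
    (hA : A.PosSemidef) (hB : B.PosSemidef) : (khatriRao A B).PosSemidef :=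
  (hA.kronecker hB).submatrix _

theorem posDef_khatriRao [Finite ι] [∀ i, Finite (l i)] [∀ i, Finite (m i)]
    {A : Matrix (Σ i, l i) (Σ i, l i) 𝕜} {B : Matrix (Σ i, m i) (Σ i, m i) 𝕜}
    (hA : A.PosSemidef) (hAdiag : ∀ i, (sigmaBlock A i i).PosDef) (hB : B.PosDef) :
    (khatriRao A B).PosDef := by
  classical
  obtain ⟨r, hr, hBr⟩ := exists_pos_posSemidef_sub_smul_one hB
  have hone : (khatriRao A (1 : Matrix (Σ i, m i) (Σ i, m i) 𝕜)).PosDef := by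
    rw [khatriRao_one]
    exact posDef_blockDiagonal' fun i => (hAdiag i).kronecker PosDef.one
  rw [← sub_add_cancel B (r • 1), khatriRao_add, khatriRao_smul]
  exact (hone.smul hr).posSemidef_add (posSemidef_khatriRao hA hBr)

/-- The transpose of `Pᵢⱼ` stands where the real system has `Pⱼᵢ`: the two agree over `ℝ`, but over
`ℂ` they are complex conjugates of each other. -/
theorem stmt10_general [Fintype ι] [∀ i, Fintype (l i)] [∀ i, Fintype (m i)]
    [DecidableEq ι] [∀ i, DecidableEq (l i)] [∀ i, DecidableEq (m i)]
    (S : Matrix (Σ i, m i) (Σ i, m i) 𝕜) (P : Matrix (Σ i, l i) (Σ i, l i) 𝕜)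
    (R : ∀ i, Matrix (m i) (l i) 𝕜)
    (hS : S.PosDef) (hP : P.PosSemidef) (hPii : ∀ i, (sigmaBlock P i i).PosDef) :
    (khatriRao P S).PosDef ∧
    ∀ F : ∀ j, Matrix (m j) (l j) 𝕜,
      (∀ i, ∑ j, sigmaBlock S i j * F j * (sigmaBlock P i j)ᵀ = R i)
        ↔ blockVec F = (khatriRao P S)⁻¹ *ᵥ blockVec R := by
  have hΓ : (khatriRao P S).PosDef := posDef_khatriRao hP hPii hS
  refine ⟨hΓ, fun F => ?_⟩
  rw [← mulVec_eq_iff_eq_inv_mulVec hΓ.isUnit, khatriRao_mulVec_blockVec,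
    blockVec_injective.eq_iff, funext_iff]

end PosDef

/-- If the block matrix `S = [Sᵢⱼ]` is positive definite, the block matrix `P = [Pᵢⱼ]` is
positive semi-definite and every diagonal block `Pᵢᵢ` is positive definite, then the block
matrix `Γ` with blocks `Γᵢⱼ = Pᵢⱼ ⊗ Sᵢⱼ` is positive definite; consequently the system
`Σⱼ (Sᵢⱼ Fⱼ Pⱼᵢ − Sᵢⱼ Lⱼ Pᵢᵢ) = 0, i = 1,…,n` has the unique solution
`vec(F₁,…,Fₙ) = Γ⁻¹ η` with `η = vec(S₁• L P₁₁, …, Sₙ• L Pₙₙ)`, `Sᵢ• L = Σⱼ Sᵢⱼ Lⱼ`. -/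
theorem stmt10 (n d : ℕ) (m : Fin n → ℕ)
    (S : ∀ i j : Fin n, Matrix (Fin (m i)) (Fin (m j)) ℝ)
    (P : Fin n → Fin n → Matrix (Fin d) (Fin d) ℝ)
    (L : ∀ j : Fin n, Matrix (Fin (m j)) (Fin d) ℝ)
    (Sbig : Matrix (Σ i : Fin n, Fin (m i)) (Σ i : Fin n, Fin (m i)) ℝ)
    (hSbig : ∀ (i j : Fin n) (r : Fin (m i)) (r' : Fin (m j)),
      Sbig ⟨i, r⟩ ⟨j, r'⟩ = S i j r r')
    (Pbig : Matrix (Fin n × Fin d) (Fin n × Fin d) ℝ)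
    (hPbig : ∀ (i j : Fin n) (c c' : Fin d), Pbig (i, c) (j, c') = P i j c c')
    (hSpd : Sbig.PosDef) (hPpsd : Pbig.PosSemidef) (hPii : ∀ i, (P i i).PosDef)
    (Γ : Matrix (Σ i : Fin n, Fin d × Fin (m i)) (Σ j : Fin n, Fin d × Fin (m j)) ℝ)
    (hΓ : ∀ (i j : Fin n) (c : Fin d) (r : Fin (m i)) (c' : Fin d) (r' : Fin (m j)),
      Γ ⟨i, (c, r)⟩ ⟨j, (c', r')⟩ = P i j c c' * S i j r r')
    (η : (Σ i : Fin n, Fin d × Fin (m i)) → ℝ)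
    (hη : ∀ (i : Fin n) (c : Fin d) (r : Fin (m i)),
      η ⟨i, (c, r)⟩ = ((∑ j, S i j * L j) * P i i) r c) :
    Γ.PosDef ∧
    ∀ F : ∀ j : Fin n, Matrix (Fin (m j)) (Fin d) ℝ,
      (∀ i, ∑ j, (S i j * F j * P j i - S i j * L j * P i i) = 0)
        ↔ (fun p : Σ i : Fin n, Fin d × Fin (m i) => F p.1 p.2.2 p.2.1)
            = Γ⁻¹.mulVec η := by
  let P' : Matrix (Σ _ : Fin n, Fin d) (Σ _ : Fin n, Fin d) ℝ :=
    Pbig.submatrix (Equiv.sigmaEquivProd _ _) (Equiv.sigmaEquivProd _ _)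
  obtain rfl : S = sigmaBlock Sbig := by ext i j r r'; exact (hSbig i j r r').symm
  obtain rfl : P = sigmaBlock P' := by ext i j c c'; exact (hPbig i j c c').symm
  obtain rfl : Γ = khatriRao P' Sbig := by ext ⟨i, c, r⟩ ⟨j, c', r'⟩; exact hΓ i j c r c' r'
  obtain rfl : η = blockVec fun i => (∑ j, sigmaBlock Sbig i j * L j) * sigmaBlock P' i i :=
    funext fun ⟨i, c, r⟩ => hη i c r
  have hP' : P'.PosSemidef := hPpsd.submatrix _
  have hsymm (i j : Fin n) : (sigmaBlock P' i j)ᵀ = sigmaBlock P' j i :=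
    congrArg (sigmaBlock · j i) hP'.isHermitian
  change _ ∧ ∀ F, _ ↔ blockVec F = _
  simpa only [Finset.sum_sub_distrib, sub_eq_zero, Matrix.sum_mul, hsymm] using
    stmt10_general Sbig P' _ hSpd hP' hPii
end
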